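/- Expected supremum of the projected noise matrix over Sobolev-constrained balls: Let c_γ := (c+γ)/γ, let S ∈ 𝒮_V with support L and φ ∈ Ψ_{S,W}, and define the projector 𝒫_L(A) := A − P_{L⊥}·A·P_{L⊥} on 𝒮_V. Let (X₁,X₁',ζ₁),…,(Xₙ,Xₙ',ζₙ) be i.i.d. copies of (X,X',ζ), where (X,X') is uniform on V×V and |ζ| ≤ 2 a.s., and set Ξ := n⁻¹∑_{j=1}^n ζ_j·E_{X_j,X_j'} − E(ζ·E_{X,X'}). Then for all δ > 0: E sup{ |⟨𝒫_L(Ξ), M⟩| : M ∈ 𝒮_V, ‖M‖₂ ≤ δ, ‖W^{1/2}M‖₂ ≤ 1 } ≤ 4·√2·√(c_γ+1)·√(1/(n·m))·δ·√(φ(δ⁻²)), where ⟨·,·⟩ is the Hilbert–Schmidt inner product. -/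

import Mathlib

open MeasureTheory Finset
open scoped ENNReal NNReal

noncomputable section

/-- Sample space for one observation: a pair of vertices `(X, X')` and a response `Y`. -/
abbrev Obs (m : ℕ) := Fin m × Fin m × ℝ

/-- Squared Hilbert–Schmidt (Frobenius) norm of a kernel. -/
def hsNormSq {m : ℕ} (S : Matrix (Fin m) (Fin m) ℝ) : ℝ := ∑ u, ∑ v, (S u v) ^ 2

/-- Squared `L₂(Π²)` norm: `‖S‖²_{L₂(Π²)} = m⁻² ‖S‖₂²`. -/
def l2PiSq {m : ℕ} (S : Matrix (Fin m) (Fin m) ℝ) : ℝ := hsNormSq S / (m : ℝ) ^ 2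

/-- Squared Sobolev (Hilbert–Schmidt) norm `‖W^{1/2}S‖₂² = ∑ₖ λₖ ‖S φₖ‖²`,
expressed through the eigendata `(lam, φ)` of `W` (indexed by `1,…,m`). -/
def sobolevHSSq {m : ℕ} (lam : ℕ → ℝ) (φ : ℕ → Fin m → ℝ)
    (S : Matrix (Fin m) (Fin m) ℝ) : ℝ :=
  ∑ k ∈ Finset.Icc 1 m, lam k * ∑ u, (S.mulVec (φ k) u) ^ 2

/-- `φ₁,…,φ_m` are orthonormal in `ℝ^V` (Euclidean inner product). -/
def OrthonormalFamily (m : ℕ) (φ : ℕ → Fin m → ℝ) : Prop :=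
  ∀ j ∈ Finset.Icc 1 m, ∀ k ∈ Finset.Icc 1 m,
    (∑ v, φ j v * φ k v) = if j = k then (1 : ℝ) else 0

/-- Eigendata of the positive semidefinite kernel `W`: orthonormal eigenfunctions `φ`,
nonnegative nondecreasing eigenvalues `lam` (indexed by `1,…,m`), `k0` the smallest index
of a positive eigenvalue, and `λ_{k+1} ≤ c·λ_k` for `k ≥ k0`. -/
structure IsEigenData (m : ℕ) (c : ℝ) (lam : ℕ → ℝ) (φ : ℕ → Fin m → ℝ) (k0 : ℕ) : Prop where
  orth : OrthonormalFamily m φ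
  nonneg : ∀ k ∈ Finset.Icc 1 m, 0 ≤ lam k
  mono : ∀ k l : ℕ, 1 ≤ k → k ≤ l → l ≤ m → lam k ≤ lam l
  k0_mem : 1 ≤ k0 ∧ k0 ≤ m ∧ 0 < lam k0
  k0_min : ∀ k ∈ Finset.Icc 1 m, 0 < lam k → k0 ≤ k
  ratio : ∀ k : ℕ, k0 ≤ k → k + 1 ≤ m → lam (k + 1) ≤ c * lam k

/-- The design `(X, X')` is uniformly distributed on `V × V`. -/
def UniformDesign (m : ℕ) (P : Measure (Obs m)) : Prop :=
  ∀ u v : Fin m, P {z : Obs m | z.1 = u ∧ z.2.1 = v} = ((m : ℝ≥0∞) ^ 2)⁻¹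

/-- The regression kernel `S_P(u,v) = m²·E_P[Y·1{X=u, X'=v}] = E_P(Y | X=u, X'=v)`. -/
def regKernel (m : ℕ) (P : Measure (Obs m)) : Matrix (Fin m) (Fin m) ℝ :=
  Matrix.of fun u v =>
    (m : ℝ) ^ 2 * ∫ z : Obs m, (if z.1 = u ∧ z.2.1 = v then z.2.2 else 0) ∂P

/-- Membership in the class `𝒫_{r,ρ,a}` of sampling distributions. -/
def MemP (m : ℕ) (r : ℕ) (ρ a : ℝ) (lam : ℕ → ℝ) (φ : ℕ → Fin m → ℝ)
    (P : Measure (Obs m)) : Prop :=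
  IsProbabilityMeasure P ∧ UniformDesign m P ∧ (∀ᵐ z ∂P, |z.2.2| ≤ a) ∧
    (regKernel m P).IsSymm ∧ (regKernel m P).rank ≤ r ∧
    sobolevHSSq lam φ (regKernel m P) ≤ ρ ^ 2 * (m : ℝ) ^ 2


/-- Squared norm of the orthogonal projection of `x` onto the support (= range, for a
symmetric matrix) of `S`. -/
def projSuppNormSq {m : ℕ} (S : Matrix (Fin m) (Fin m) ℝ) (x : Fin m → ℝ) : ℝ :=
  ‖(Submodule.orthogonalProjectionOnto (LinearMap.range (Matrix.toEuclideanLin S))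
      ((EuclideanSpace.equiv (Fin m) ℝ).symm x) : EuclideanSpace ℝ (Fin m))‖ ^ 2

/-- The coherence function `φ(S;t) := ∑_{λ_j ≤ t} ‖P_L φ_j‖²`, `L = supp(S)`. -/
def cohFn {m : ℕ} (lam : ℕ → ℝ) (φ : ℕ → Fin m → ℝ) (S : Matrix (Fin m) (Fin m) ℝ)
    (t : ℝ) : ℝ :=
  ∑ j ∈ (Finset.Icc 1 m).filter fun j => lam j ≤ t, projSuppNormSq S (φ j)

/-- The regularized coherence function
`φ̄(S;t) := sup_{0 < σ ≤ t} F̄(σ)·sup_{σ' ≥ σ} φ(S;σ')/F̄(σ')`. -/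
def cohBar {m : ℕ} (lam : ℕ → ℝ) (φ : ℕ → Fin m → ℝ) (Fbar : ℝ → ℝ)
    (S : Matrix (Fin m) (Fin m) ℝ) (t : ℝ) : ℝ :=
  sSup ((fun σ => Fbar σ *
      sSup ((fun σ' => cohFn lam φ S σ' / Fbar σ') '' Set.Ici σ)) '' Set.Ioc 0 t)

/-- `φ̄(S; ε̄⁻¹)`, with the convention `φ̄(S; +∞) := rank S` when `ε̄ = 0`. -/
def cohBarInv {m : ℕ} (lam : ℕ → ℝ) (φ : ℕ → Fin m → ℝ) (Fbar : ℝ → ℝ)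
    (S : Matrix (Fin m) (Fin m) ℝ) (ebar : ℝ) : ℝ :=
  if ebar = 0 then (S.rank : ℝ) else cohBar lam φ Fbar S ebar⁻¹

/-- The nuclear norm of a symmetric matrix: the sum of absolute values of its
eigenvalues. -/
def nuclearNorm {m : ℕ} (S : Matrix (Fin m) (Fin m) ℝ) : ℝ :=
  if h : S.IsHermitian then ∑ i, |h.eigenvalues i| else 0

/-- The spectral function `F(t) := #{j : λ_j ≤ t}`. -/
def specFn (m : ℕ) (lam : ℕ → ℝ) (t : ℝ) : ℕ :=
  ((Finset.Icc 1 m).filter fun j => lam j ≤ t).card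

/-- `F̄` is a regularized majorant of the spectral function `F`: nondecreasing,
`F ≤ F̄`, `t ↦ F̄(t)/t` nonincreasing, `∫_t^∞ F̄(s)s⁻² ds ≤ γ⁻¹ F̄(t)/t`, and
`F̄(t) = m` for `t ≥ λ_m`. -/
structure IsSpectralMajorant (m : ℕ) (γ : ℝ) (lam : ℕ → ℝ) (Fbar : ℝ → ℝ) : Prop where
  pos : ∀ t : ℝ, 0 < t → 0 < Fbar t
  mono : ∀ s t : ℝ, 0 < s → s ≤ t → Fbar s ≤ Fbar t
  majorant : ∀ t : ℝ, 0 < t → (specFn m lam t : ℝ) ≤ Fbar t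
  ratio_anti : ∀ s t : ℝ, 0 < s → s ≤ t → Fbar t / t ≤ Fbar s / s
  integral : ∀ t : ℝ, 0 < t → (∫ s in Set.Ioi t, Fbar s / s ^ 2) ≤ γ⁻¹ * Fbar t / t
  top : ∀ t : ℝ, lam m ≤ t → Fbar t = m

/-- The quantity `t_{n,m} = t + 3 log(2 log₂ n + ½ log₂(λ_m/λ̃) + 2)`. -/
def tnm (n m : ℕ) (t lamTilde : ℝ) (lam : ℕ → ℝ) : ℝ :=
  t + 3 * Real.log (2 * Real.logb 2 n + (1 / 2) * Real.logb 2 (lam m / lamTilde) + 2)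

/-- `(μ, ψ)` is a spectral representation `S = ∑ᵢ μᵢ (ψᵢ ⊗ ψᵢ)` of the symmetric
kernel `S`, with `ψ₁,…,ψ_m` orthonormal. -/
def SpectralRep (m : ℕ) (S : Matrix (Fin m) (Fin m) ℝ) (μ : ℕ → ℝ)
    (ψ : ℕ → Fin m → ℝ) : Prop :=
  OrthonormalFamily m ψ ∧
    S = Matrix.of fun u v => ∑ i ∈ Finset.Icc 1 m, μ i * ψ i u * ψ i v

/-- `‖P_L x‖²` for `L = supp(S) = l.s.{ψᵢ : μᵢ ≠ 0}`, computed from the spectral data. -/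
def projNormSqData {m : ℕ} (μ : ℕ → ℝ) (ψ : ℕ → Fin m → ℝ) (x : Fin m → ℝ) : ℝ :=
  ∑ i ∈ (Finset.Icc 1 m).filter fun i => μ i ≠ 0, (∑ v, x v * ψ i v) ^ 2

/-- The coherence function `φ(S;t) := ∑_{λ_j ≤ t} ‖P_L φ_j‖²`, from the spectral data. -/
def cohFnData {m : ℕ} (lam : ℕ → ℝ) (φ : ℕ → Fin m → ℝ) (μ : ℕ → ℝ)
    (ψ : ℕ → Fin m → ℝ) (t : ℝ) : ℝ :=
  ∑ j ∈ (Finset.Icc 1 m).filter fun j => lam j ≤ t, projNormSqData μ ψ (φ j)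

/-- Membership of `φfun` in the class `Ψ_{S,W}`: `φfun` is nonnegative and nondecreasing
on `(0,∞)`, dominates the coherence function `φ(S;·)`, and `φfun/F̄` is nonincreasing. -/
def MemPsi {m : ℕ} (lam : ℕ → ℝ) (φ : ℕ → Fin m → ℝ) (Fbar : ℝ → ℝ) (μ : ℕ → ℝ)
    (ψ : ℕ → Fin m → ℝ) (φfun : ℝ → ℝ) : Prop :=
  (∀ t : ℝ, 0 < t → 0 ≤ φfun t) ∧
  (∀ s t : ℝ, 0 < s → s ≤ t → φfun s ≤ φfun t) ∧
  (∀ t : ℝ, 0 < t → cohFnData lam φ μ ψ t ≤ φfun t) ∧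
  (∀ s t : ℝ, 0 < s → s ≤ t → φfun t / Fbar t ≤ φfun s / Fbar s)

/-- The Hilbert–Schmidt inner product of two kernels. -/
def hsInner {m : ℕ} (A B : Matrix (Fin m) (Fin m) ℝ) : ℝ := ∑ u, ∑ v, A u v * B u v

/-- The matrix `E_{u,v} = ½(e_u ⊗ e_v + e_v ⊗ e_u)`. -/
def Emat (m : ℕ) (u v : Fin m) : Matrix (Fin m) (Fin m) ℝ :=
  Matrix.of fun a b =>
    ((if a = u ∧ b = v then (1 : ℝ) else 0) + (if a = v ∧ b = u then 1 else 0)) / 2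

/-- The matrix of the orthogonal projector `P_L`, `L = supp(S)`, from spectral data. -/
def projMatData {m : ℕ} (μ : ℕ → ℝ) (ψ : ℕ → Fin m → ℝ) : Matrix (Fin m) (Fin m) ℝ :=
  Matrix.of fun u v => ∑ i ∈ (Finset.Icc 1 m).filter fun i => μ i ≠ 0, ψ i u * ψ i v

/-- The projector `𝒫_L(A) := A − P_{L^⊥} A P_{L^⊥}` on kernels. -/
def calPData {m : ℕ} (μ : ℕ → ℝ) (ψ : ℕ → Fin m → ℝ)
    (A : Matrix (Fin m) (Fin m) ℝ) : Matrix (Fin m) (Fin m) ℝ :=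
  A - (1 - projMatData μ ψ) * A * (1 - projMatData μ ψ)

/-- The noise matrix `Ξ := n⁻¹ ∑ⱼ ζⱼ E_{Xⱼ,Xⱼ'} − E(ζ E_{X,X'})`. -/
def XiMat {m : ℕ} (n : ℕ) (P : Measure (Obs m)) (ω : Fin n → Obs m) :
    Matrix (Fin m) (Fin m) ℝ :=
  (n : ℝ)⁻¹ • (∑ j, (ω j).2.2 • Emat m (ω j).1 (ω j).2.1) -
    Matrix.of fun u v => ∫ z : Obs m, z.2.2 * Emat m z.1 z.2.1 u v ∂P


section helpers

lemma pns_complete {m : ℕ} {φ : ℕ → Fin m → ℝ} (h : OrthonormalFamily m φ) (u v : Fin m) :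
    ∑ k ∈ Finset.Icc 1 m, φ k u * φ k v = if u = v then (1 : ℝ) else 0 := by
  let Φ : Matrix (Fin m) (Fin m) ℝ := Matrix.of fun i v => φ (i + 1) v
  have h1 : Φ * Φ.transpose = 1 := by
    ext i j
    have := h (i + 1) (by simp) (j + 1) (by simp)
    simp only [Matrix.mul_apply, Matrix.transpose_apply, Φ, Matrix.of_apply, Matrix.one_apply]
    rw [this]
    simp [Fin.ext_iff]
  have h2 : Φ.transpose * Φ = 1 := mul_eq_one_comm.mp h1
  have h3 := congrFun (congrFun h2 u) v
  simp only [Matrix.mul_apply, Matrix.transpose_apply, Φ, Matrix.of_apply, Matrix.one_apply] at h3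
  rw [← h3, Fin.sum_univ_eq_sum_range (fun i => φ (i + 1) u * φ (i + 1) v) m]
  rw [Finset.range_eq_Ico, Finset.sum_Ico_add' (fun i => φ i u * φ i v) 0 m 1]
  rfl

lemma pns_parseval_vec {m : ℕ} {φ : ℕ → Fin m → ℝ} (h : OrthonormalFamily m φ)
    (x y : Fin m → ℝ) :
    ∑ k ∈ Finset.Icc 1 m, (∑ v, x v * φ k v) * (∑ v, y v * φ k v) = ∑ v, x v * y v := by
  calc _ = ∑ k ∈ Finset.Icc 1 m, ∑ u, ∑ v, (x u * y v) * (φ k u * φ k v) := by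
        refine Finset.sum_congr rfl fun k _ => ?_
        rw [Finset.sum_mul_sum]
        refine Finset.sum_congr rfl fun u _ => Finset.sum_congr rfl fun v _ => by ring
    _ = ∑ u, ∑ v, (x u * y v) * ∑ k ∈ Finset.Icc 1 m, (φ k u * φ k v) := by
        rw [Finset.sum_comm]
        refine Finset.sum_congr rfl fun u _ => ?_
        rw [Finset.sum_comm]
        refine Finset.sum_congr rfl fun v _ => by rw [Finset.mul_sum]
    _ = _ := by
        simp [pns_complete h]

lemma pns_parseval {m : ℕ} {φ : ℕ → Fin m → ℝ} (h : OrthonormalFamily m φ)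
    (A B : Matrix (Fin m) (Fin m) ℝ) :
    ∑ k ∈ Finset.Icc 1 m, ∑ u, A.mulVec (φ k) u * B.mulVec (φ k) u = hsInner A B := by
  rw [Finset.sum_comm]
  refine Finset.sum_congr rfl fun u _ => ?_
  exact pns_parseval_vec h (A u) (B u)

/-- deterministic bound -/
lemma pns_det {m : ℕ} {φ : ℕ → Fin m → ℝ} {lam : ℕ → ℝ} (h : OrthonormalFamily m φ)
    (hl : ∀ k ∈ Finset.Icc 1 m, 0 ≤ lam k) {δ : ℝ} (hδ : 0 < δ)
    (B M : Matrix (Fin m) (Fin m) ℝ) (hM : hsNormSq M ≤ δ ^ 2) (hS : sobolevHSSq lam φ M ≤ 1) :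
    (hsInner B M) ^ 2 ≤
      2 * ∑ k ∈ Finset.Icc 1 m, (lam k + (δ ^ 2)⁻¹)⁻¹ * ∑ u, (B.mulVec (φ k) u) ^ 2 := by
  have hT : 0 < (δ ^ 2)⁻¹ := by positivity
  have hM' : ∑ k ∈ Finset.Icc 1 m, (lam k + (δ ^ 2)⁻¹) * ∑ u, (M.mulVec (φ k) u) ^ 2 ≤ 2 := by
    have e : ∑ k ∈ Finset.Icc 1 m, ∑ u, (M.mulVec (φ k) u) ^ 2 = hsNormSq M := by
      have := pns_parseval h M M
      simpa [hsInner, hsNormSq, sq] using this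
    simp only [add_mul, Finset.sum_add_distrib]
    rw [← Finset.mul_sum, e]
    have : (δ ^ 2)⁻¹ * hsNormSq M ≤ 1 := by
      rw [inv_mul_le_iff₀ (by positivity)]; linarith
    unfold sobolevHSSq at hS
    linarith
  have key := Finset.sum_sq_le_sum_mul_sum_of_sq_le_mul (Finset.Icc 1 m)
    (r := fun k => ∑ u, B.mulVec (φ k) u * M.mulVec (φ k) u)
    (f := fun k => (lam k + (δ ^ 2)⁻¹)⁻¹ * ∑ u, (B.mulVec (φ k) u) ^ 2)
    (g := fun k => (lam k + (δ ^ 2)⁻¹) * ∑ u, (M.mulVec (φ k) u) ^ 2)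
    (fun k hk => mul_nonneg (inv_nonneg.2 (by have := hl k hk; linarith))
      (Finset.sum_nonneg fun u _ => sq_nonneg _))
    (fun k hk => mul_nonneg (by have := hl k hk; linarith)
      (Finset.sum_nonneg fun u _ => sq_nonneg _))
    (fun k hk => by
      have hp : 0 < lam k + (δ ^ 2)⁻¹ := by have := hl k hk; linarith
      have := Finset.sum_mul_sq_le_sq_mul_sq Finset.univ (fun u => B.mulVec (φ k) u)
        (fun u => M.mulVec (φ k) u)
      calc _ ≤ _ := this
        _ = _ := by rw [mul_mul_mul_comm, inv_mul_cancel₀ hp.ne', one_mul])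
  rw [pns_parseval h] at key
  refine key.trans ?_
  rw [mul_comm]
  refine mul_le_mul_of_nonneg_right hM' (Finset.sum_nonneg fun k hk => ?_)
  exact mul_nonneg (inv_nonneg.2 (by have := hl k hk; linarith))
      (Finset.sum_nonneg fun u _ => sq_nonneg _)

lemma pns_int_inv_sq {a : ℝ} (ha : 0 < a) :
    IntegrableOn (fun s : ℝ => 1 / s ^ 2) (Set.Ioi a) ∧
      ∫ s in Set.Ioi a, 1 / s ^ 2 = a⁻¹ := by
  have e : Set.EqOn (fun s : ℝ => s ^ (-2 : ℝ)) (fun s : ℝ => 1 / s ^ 2) (Set.Ioi a) := by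
    intro s hs
    have hs0 : 0 < s := ha.trans hs
    simp only
    rw [Real.rpow_neg hs0.le, one_div]
    norm_cast
  constructor
  · exact (integrableOn_Ioi_rpow_of_lt (by norm_num) ha).congr_fun e measurableSet_Ioi
  · rw [← setIntegral_congr_fun measurableSet_Ioi e, integral_Ioi_rpow_of_lt (by norm_num) ha]
    norm_num
    rw [Real.rpow_neg_one]

/-- Abel summation. -/
lemma pns_abel {m : ℕ} {γ : ℝ} {lam : ℕ → ℝ} {Fbar : ℝ → ℝ}
    (hl : ∀ k ∈ Finset.Icc 1 m, 0 ≤ lam k)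
    (hF : IsSpectralMajorant m γ lam Fbar) (a : ℕ → ℝ) (ha : ∀ k ∈ Finset.Icc 1 m, 0 ≤ a k)
    {T C : ℝ} (hT : 0 < T) (hC : 0 ≤ C)
    (hb : ∀ s, T < s → ∑ j ∈ (Finset.Icc 1 m).filter (fun j => lam j ≤ s), a j ≤ C * Fbar s) :
    ∑ k ∈ Finset.Icc 1 m, (lam k + T)⁻¹ * a k ≤ C * (γ⁻¹ * Fbar T / T) := by
  have hFm : ∀ s, 0 < s → Fbar s ≤ m := fun s hs => by
    rw [← hF.top (max s (lam m)) (le_max_right _ _)]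
    exact hF.mono _ _ hs (le_max_left _ _)
  have hFint : IntegrableOn (fun s => Fbar s / s ^ 2) (Set.Ioi T) := by
    refine Integrable.mono' ((pns_int_inv_sq hT).1.const_mul (m : ℝ)) ?_ ?_
    · have h1 : AEMeasurable Fbar (volume.restrict (Set.Ioi T)) :=
        aemeasurable_restrict_of_monotoneOn measurableSet_Ioi
          (fun x hx y hy hxy => hF.mono _ _ (hT.trans hx) hxy)
      exact (h1.div (by fun_prop)).aestronglyMeasurable
    · refine (ae_restrict_mem measurableSet_Ioi).mono fun s hs => ?_
      have hs0 : 0 < s := hT.trans hs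
      rw [Real.norm_of_nonneg (div_nonneg (hF.pos s hs0).le (by positivity)), mul_one_div]
      have := hFm s hs0
      gcongr
  have hterm : ∀ k ∈ Finset.Icc 1 m,
      IntegrableOn (fun s => (Set.Ioi (max (lam k) T)).indicator (fun s => a k * (1 / s ^ 2)) s)
        (Set.Ioi T) := fun k _ => by
    refine IntegrableOn.integrable ?_ |>.indicator measurableSet_Ioi
    exact (pns_int_inv_sq hT).1.const_mul _
  calc _ ≤ ∑ k ∈ Finset.Icc 1 m, (max (lam k) T)⁻¹ * a k := by
        refine Finset.sum_le_sum fun k hk => mul_le_mul_of_nonneg_right ?_ (ha k hk)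
        have := hl k hk
        exact inv_anti₀ (lt_max_of_lt_right hT) (max_le (by linarith) (by linarith))
    _ = ∑ k ∈ Finset.Icc 1 m, ∫ s in Set.Ioi T,
          (Set.Ioi (max (lam k) T)).indicator (fun s => a k * (1 / s ^ 2)) s := by
        refine Finset.sum_congr rfl fun k _ => ?_
        rw [setIntegral_indicator measurableSet_Ioi, Set.Ioi_inter_Ioi,
          max_eq_right (le_max_right _ _), integral_const_mul,
          (pns_int_inv_sq (lt_max_of_lt_right hT)).2, mul_comm]
    _ = ∫ s in Set.Ioi T, ∑ k ∈ Finset.Icc 1 m,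
          (Set.Ioi (max (lam k) T)).indicator (fun s => a k * (1 / s ^ 2)) s := by
        rw [integral_finsetSum _ hterm]
    _ ≤ ∫ s in Set.Ioi T, C * (Fbar s / s ^ 2) := by
        refine setIntegral_mono_on (integrable_finsetSum _ hterm) (hFint.const_mul C)
          measurableSet_Ioi fun s hs => ?_
        have hs0 : 0 < s := hT.trans hs
        calc _ ≤ ∑ k ∈ Finset.Icc 1 m, (if lam k ≤ s then a k else 0) * (1 / s ^ 2) := by
              refine Finset.sum_le_sum fun k hk => ?_
              have := ha k hk
              simp only [Set.indicator_apply, Set.mem_Ioi]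
              split_ifs with h1 h2 h2
              · exact le_rfl
              · exact absurd ((le_max_left _ _).trans h1.le) h2
              · positivity
              · simp
          _ = (∑ j ∈ (Finset.Icc 1 m).filter (fun j => lam j ≤ s), a j) * (1 / s ^ 2) := by
              rw [← Finset.sum_mul, Finset.sum_filter]
          _ ≤ C * Fbar s * (1 / s ^ 2) := by
              have := hb s hs
              gcongr
          _ = _ := by ring
    _ = C * ∫ s in Set.Ioi T, Fbar s / s ^ 2 := integral_const_mul _ _
    _ ≤ _ := mul_le_mul_of_nonneg_left (hF.integral T hT) hC


/-- index set of the support -/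
def pnsI (m : ℕ) (μ : ℕ → ℝ) : Finset ℕ := (Finset.Icc 1 m).filter fun i => μ i ≠ 0

lemma pns_orth {m : ℕ} {ψ : ℕ → Fin m → ℝ} (h : OrthonormalFamily m ψ) (μ : ℕ → ℝ)
    (c : ℕ → ℝ) :
    ∑ v, (∑ i ∈ pnsI m μ, c i * ψ i v) ^ 2 = ∑ i ∈ pnsI m μ, c i ^ 2 := by
  calc _ = ∑ v, ∑ i ∈ pnsI m μ, ∑ j ∈ pnsI m μ, (c i * c j) * (ψ i v * ψ j v) := by
        refine Finset.sum_congr rfl fun v _ => ?_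
        rw [sq, Finset.sum_mul_sum]
        refine Finset.sum_congr rfl fun u _ => Finset.sum_congr rfl fun v _ => by ring
    _ = ∑ i ∈ pnsI m μ, ∑ j ∈ pnsI m μ, (c i * c j) * ∑ v, (ψ i v * ψ j v) := by
        rw [Finset.sum_comm]
        refine Finset.sum_congr rfl fun u _ => ?_
        rw [Finset.sum_comm]
        refine Finset.sum_congr rfl fun v _ => by rw [Finset.mul_sum]
    _ = ∑ i ∈ pnsI m μ, ∑ j ∈ pnsI m μ, (c i * c j) * (if i = j then (1 : ℝ) else 0) := by
        refine Finset.sum_congr rfl fun i hi => Finset.sum_congr rfl fun j hj => ?_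
        rw [h i (Finset.mem_filter.1 hi).1 j (Finset.mem_filter.1 hj).1]
    _ = _ := by
        refine Finset.sum_congr rfl fun i hi => ?_
        simp [hi, sq]

lemma pns_normsq {m : ℕ} {ψ : ℕ → Fin m → ℝ} (h : OrthonormalFamily m ψ) {i : ℕ}
    (hi : i ∈ Finset.Icc 1 m) : ∑ v, ψ i v ^ 2 = 1 := by
  have := h i hi i hi
  simpa [sq] using this

lemma pns_P_sq {m : ℕ} {ψ : ℕ → Fin m → ℝ} (h : OrthonormalFamily m ψ) (μ : ℕ → ℝ) :
    ∑ u, ∑ a, projMatData μ ψ a u ^ 2 = ((pnsI m μ).card : ℝ) := by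
  have : ∀ u, ∑ a, projMatData μ ψ a u ^ 2 = ∑ i ∈ pnsI m μ, ψ i u ^ 2 := fun u => by
    rw [← pns_orth h μ (fun i => ψ i u)]
    refine Finset.sum_congr rfl fun a _ => ?_
    simp only [projMatData, Matrix.of_apply, pnsI]
    congr 1
    exact Finset.sum_congr rfl fun i _ => mul_comm _ _
  simp only [this]
  rw [Finset.sum_comm, Finset.sum_congr rfl
    (fun i (hi : i ∈ pnsI m μ) => pns_normsq h (Finset.mem_filter.1 hi).1)]
  simp

lemma pns_P_tr {m : ℕ} {ψ : ℕ → Fin m → ℝ} (h : OrthonormalFamily m ψ) (μ : ℕ → ℝ) :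
    ∑ u, projMatData μ ψ u u = ((pnsI m μ).card : ℝ) := by
  simp only [projMatData, Matrix.of_apply]
  rw [Finset.sum_comm]
  change ∑ i ∈ pnsI m μ, _ = _
  rw [Finset.sum_congr rfl
    (fun i (hi : i ∈ pnsI m μ) => h i (Finset.mem_filter.1 hi).1 i (Finset.mem_filter.1 hi).1)]
  simp

lemma pns_Q_sq {m : ℕ} {ψ : ℕ → Fin m → ℝ} (h : OrthonormalFamily m ψ) (μ : ℕ → ℝ) :
    ∑ u, ∑ a, (1 - projMatData μ ψ) a u ^ 2 ≤ (m : ℝ) := by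
  have e : ∀ u, ∑ a, (1 - projMatData μ ψ) a u ^ 2
      = 1 - 2 * projMatData μ ψ u u + ∑ a, projMatData μ ψ a u ^ 2 := fun u => by
    have : ∀ a, (1 - projMatData μ ψ) a u ^ 2 =
        (if a = u then (1 - 2 * projMatData μ ψ a u) else 0) + projMatData μ ψ a u ^ 2 := by
      intro a
      rw [Matrix.sub_apply, Matrix.one_apply]
      split_ifs <;> ring
    simp only [this, Finset.sum_add_distrib]
    simp
  simp only [e, Finset.sum_add_distrib, Finset.sum_sub_distrib, ← Finset.mul_sum]
  rw [pns_P_sq h, pns_P_tr h]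
  simp
  nlinarith [Nat.cast_nonneg (α := ℝ) (pnsI m μ).card]

lemma pns_P_vec {m : ℕ} {ψ : ℕ → Fin m → ℝ} (h : OrthonormalFamily m ψ) (μ : ℕ → ℝ)
    (x : Fin m → ℝ) :
    ∑ v, ((projMatData μ ψ).mulVec x v) ^ 2 = projNormSqData μ ψ x := by
  unfold projNormSqData
  change _ = ∑ i ∈ pnsI m μ, _
  rw [← pns_orth h μ]
  refine Finset.sum_congr rfl fun v _ => ?_
  congr 1
  simp only [Matrix.mulVec, dotProduct, projMatData, Matrix.of_apply, Finset.sum_mul]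
  rw [Finset.sum_comm]
  refine Finset.sum_congr rfl fun i _ => Finset.sum_congr rfl fun w _ => by ring

/-- `𝒫_L` composed with evaluation, as a linear functional. -/
def pnsL {m : ℕ} (μ : ℕ → ℝ) (ψ : ℕ → Fin m → ℝ) (x : Fin m → ℝ) (a : Fin m) :
    Matrix (Fin m) (Fin m) ℝ →ₗ[ℝ] ℝ where
  toFun A := (calPData μ ψ A).mulVec x a
  map_add' A B := by
    have : calPData μ ψ (A + B) = calPData μ ψ A + calPData μ ψ B := by
      simp only [calPData, Matrix.mul_add, Matrix.add_mul]; abel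
    rw [this, Matrix.add_mulVec]; rfl
  map_smul' r A := by
    have : calPData μ ψ (r • A) = r • calPData μ ψ A := by
      simp only [calPData, Matrix.mul_smul, Matrix.smul_mul, smul_sub]
    rw [this, Matrix.smul_mulVec]; rfl

lemma pnsL_single {m : ℕ} (μ : ℕ → ℝ) (ψ : ℕ → Fin m → ℝ) (x : Fin m → ℝ) (a u v : Fin m) :
    pnsL μ ψ x a (Matrix.single u v 1) =
      projMatData μ ψ a u * x v + (1 - projMatData μ ψ) a u * (projMatData μ ψ).mulVec x v := by
  have hQ : (1 - projMatData μ ψ).mulVec x v = x v - (projMatData μ ψ).mulVec x v := by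
    rw [Matrix.sub_mulVec, Matrix.one_mulVec]; rfl
  have h1 : ((1 - projMatData μ ψ) * Matrix.single u v 1 * (1 - projMatData μ ψ)).mulVec x a
      = (1 - projMatData μ ψ) a u * (1 - projMatData μ ψ).mulVec x v := by
    rw [← Matrix.mulVec_mulVec, ← Matrix.mulVec_mulVec]
    generalize (1 - projMatData μ ψ).mulVec x = y
    rw [Matrix.single_mulVec]
    simp [Matrix.mulVec, dotProduct, Function.update_apply]
  have h2 : (Matrix.single u v (1 : ℝ)).mulVec x a = if a = u then x v else 0 := by
    rw [Matrix.single_mulVec]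
    simp [Function.update_apply]
  change (Matrix.single u v (1 : ℝ) - _).mulVec x a = _
  rw [Matrix.sub_mulVec, Pi.sub_apply, h1, h2, hQ]
  rw [Matrix.sub_apply, Matrix.one_apply]
  split_ifs <;> ring

lemma pns_Emat {m : ℕ} (u v : Fin m) :
    Emat m u v = (1 / 2 : ℝ) • (Matrix.single u v 1 + Matrix.single v u 1) := by
  ext a b
  simp only [Emat, Matrix.of_apply, Matrix.smul_apply, Matrix.add_apply, Matrix.single_apply,
    smul_eq_mul, eq_comm (a := a), eq_comm (a := b)]
  ring

lemma pns_sum_E {m : ℕ} {ψ : ℕ → Fin m → ℝ} (h : OrthonormalFamily m ψ) (μ : ℕ → ℝ)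
    (x : Fin m → ℝ) :
    ∑ a, ∑ u, ∑ v, (pnsL μ ψ x a (Emat m u v)) ^ 2 ≤
      2 * ((pnsI m μ).card * ∑ v, x v ^ 2 + m * projNormSqData μ ψ x) := by
  have hs : ∀ a, ∑ u, ∑ v, (pnsL μ ψ x a (Emat m u v)) ^ 2 ≤
      ∑ u, ∑ v, (pnsL μ ψ x a (Matrix.single u v 1)) ^ 2 := fun a => by
    calc _ ≤ ∑ u, ∑ v, ((1 / 2) * (pnsL μ ψ x a (Matrix.single u v 1)) ^ 2 +
            (1 / 2) * (pnsL μ ψ x a (Matrix.single v u 1)) ^ 2) := by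
          refine Finset.sum_le_sum fun u _ => Finset.sum_le_sum fun v _ => ?_
          rw [pns_Emat, map_smul, map_add, smul_eq_mul]
          nlinarith [sq_nonneg (pnsL μ ψ x a (Matrix.single u v 1) -
            pnsL μ ψ x a (Matrix.single v u 1))]
      _ = _ := by
          simp only [Finset.sum_add_distrib, ← Finset.mul_sum]
          rw [Finset.sum_comm (f := fun u v => (pnsL μ ψ x a (Matrix.single v u 1)) ^ 2)]
          ring
  calc _ ≤ ∑ a, ∑ u, ∑ v, (2 * (projMatData μ ψ a u ^ 2 * x v ^ 2) +
          2 * ((1 - projMatData μ ψ) a u ^ 2 * ((projMatData μ ψ).mulVec x v) ^ 2)) := by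
        refine Finset.sum_le_sum fun a _ => (hs a).trans ?_
        refine Finset.sum_le_sum fun u _ => Finset.sum_le_sum fun v _ => ?_
        rw [pnsL_single]
        nlinarith [sq_nonneg (projMatData μ ψ a u * x v -
          (1 - projMatData μ ψ) a u * (projMatData μ ψ).mulVec x v)]
    _ = 2 * ((∑ u, ∑ a, projMatData μ ψ a u ^ 2) * ∑ v, x v ^ 2 +
          (∑ u, ∑ a, (1 - projMatData μ ψ) a u ^ 2) *
            ∑ v, ((projMatData μ ψ).mulVec x v) ^ 2) := by
        simp only [Finset.sum_add_distrib, ← Finset.mul_sum, ← Finset.sum_mul]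
        rw [Finset.sum_comm, Finset.sum_comm (f := fun a u => (1 - projMatData μ ψ) a u ^ 2)]
        ring
    _ ≤ _ := by
        rw [pns_P_sq h, pns_P_vec h]
        have := pns_Q_sq h μ
        have h0 : 0 ≤ projNormSqData μ ψ x := Finset.sum_nonneg fun _ _ => sq_nonneg _
        gcongr

/-- weighted sum bound -/
lemma pns_weighted {m k0 : ℕ} {c γ : ℝ} {lam : ℕ → ℝ} {φ : ℕ → Fin m → ℝ} {Fbar : ℝ → ℝ}
    {μ : ℕ → ℝ} {ψ : ℕ → Fin m → ℝ} {φfun : ℝ → ℝ} (hm : 1 ≤ m)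
    (hE : IsEigenData m c lam φ k0) (hF : IsSpectralMajorant m γ lam Fbar)
    (hψ : OrthonormalFamily m ψ) (hΨ : MemPsi lam φ Fbar μ ψ φfun) {T : ℝ} (hT : 0 < T) :
    ∑ k ∈ Finset.Icc 1 m, (lam k + T)⁻¹ * ((pnsI m μ).card + m * projNormSqData μ ψ (φ k)) ≤
      m * (2 * φfun T * γ⁻¹ / T) := by
  obtain ⟨h0, hmono, hcoh, hanti⟩ := hΨ
  have hm0 : (0 : ℝ) < m := by exact_mod_cast hm
  have hFT := hF.pos T hT
  have hr : ((pnsI m μ).card : ℝ) / m ≤ φfun T / Fbar T := by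
    have ht : T ≤ max T (lam m) := le_max_left _ _
    refine le_trans ?_ (hanti T _ hT ht)
    rw [hF.top _ (le_max_right _ _)]
    refine div_le_div_of_nonneg_right (le_trans ?_ (hcoh _ (hT.trans_le ht))) hm0.le
    unfold cohFnData
    rw [Finset.filter_true_of_mem (fun k hk => (hE.mono k m (Finset.mem_Icc.1 hk).1
      (Finset.mem_Icc.1 hk).2 le_rfl).trans (le_max_right _ _))]
    unfold projNormSqData
    rw [Finset.sum_comm]
    change _ ≤ ∑ i ∈ pnsI m μ, _
    have : ∀ i ∈ pnsI m μ, ∑ j ∈ Finset.Icc 1 m, (∑ v, φ j v * ψ i v) ^ 2 = 1 := fun i hi => by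
      have h1 := pns_parseval_vec hE.orth (ψ i) (ψ i)
      rw [hψ i (Finset.mem_filter.1 hi).1 i (Finset.mem_filter.1 hi).1, if_pos rfl] at h1
      rw [← h1]
      refine Finset.sum_congr rfl fun j _ => ?_
      rw [sq]; simp only [mul_comm]
    rw [Finset.sum_congr rfl this]
    simp
  have hp : ∀ k, 0 ≤ projNormSqData μ ψ (φ k) := fun k => Finset.sum_nonneg fun _ _ => sq_nonneg _
  have hφT := h0 T hT
  have key := pns_abel hE.nonneg hF
    (fun k => ((pnsI m μ).card + m * projNormSqData μ ψ (φ k)))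
    (fun k _ => add_nonneg (Nat.cast_nonneg _) (mul_nonneg hm0.le (hp k)))
    (C := m * (2 * (φfun T / Fbar T))) hT (by positivity) (fun s hs => by
      have hs0 := hT.trans hs
      have hFs := hF.pos s hs0
      rw [Finset.sum_add_distrib, ← Finset.mul_sum, Finset.sum_const, nsmul_eq_mul]
      have h1 := hF.majorant s hs0
      have h2 := hcoh s hs0
      have h3 : φfun s ≤ φfun T / Fbar T * Fbar s := by
        rw [← div_le_iff₀ hFs]; exact hanti T s hT hs.le
      unfold specFn at h1
      unfold cohFnData at h2
      have h4 : ((pnsI m μ).card : ℝ) ≤ m * (φfun T / Fbar T) := by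
        rw [div_le_iff₀ hm0] at hr; linarith
      calc _ ≤ Fbar s * (m * (φfun T / Fbar T)) + m * (φfun T / Fbar T * Fbar s) := by
            gcongr
            exact h2.trans h3
        _ = _ := by ring)
  refine key.trans (le_of_eq ?_)
  field_simp


lemma pns_memLp {m : ℕ} {P : Measure (Obs m)} [IsProbabilityMeasure P]
    (hb : ∀ᵐ z ∂P, |z.2.2| ≤ 2) (g : Fin m → Fin m → ℝ) (p : ℝ≥0∞) :
    MemLp (fun z : Obs m => z.2.2 * g z.1 z.2.1) p P := by
  have hg : Measurable (fun z : Obs m => g z.1 z.2.1) := by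
    have : Measurable (fun q : Fin m × Fin m => g q.1 q.2) := measurable_of_finite _
    exact this.comp (by fun_prop : Measurable fun z : Obs m => (z.1, z.2.1))
  refine MemLp.of_bound (C := 2 * ∑ u, ∑ v, |g u v|) (Measurable.aestronglyMeasurable (by fun_prop)) ?_
  filter_upwards [hb] with z hz
  rw [Real.norm_eq_abs, abs_mul]
  refine mul_le_mul hz ?_ (abs_nonneg _) (by norm_num)
  calc |g z.1 z.2.1| ≤ ∑ v, |g z.1 v| :=
        Finset.single_le_sum (f := fun v => |g z.1 v|) (fun _ _ => abs_nonneg _) (Finset.mem_univ _)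
    _ ≤ _ := Finset.single_le_sum (f := fun u => ∑ v, |g u v|)
        (fun _ _ => Finset.sum_nonneg fun _ _ => abs_nonneg _) (Finset.mem_univ _)

lemma pns_second_moment {m : ℕ} {P : Measure (Obs m)} [IsProbabilityMeasure P]
    (hU : UniformDesign m P)
    (hb : ∀ᵐ z ∂P, |z.2.2| ≤ 2) (g : Fin m → Fin m → ℝ) :
    ∫ z : Obs m, (z.2.2 * g z.1 z.2.1) ^ 2 ∂P ≤ 4 / (m : ℝ) ^ 2 * ∑ u, ∑ v, g u v ^ 2 := by
  have hms : ∀ u v : Fin m, MeasurableSet {z : Obs m | z.1 = u ∧ z.2.1 = v} := fun u v => by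
    have h1 : MeasurableSet {z : Obs m | z.1 = u} :=
      (by fun_prop : Measurable fun z : Obs m => z.1) (measurableSet_singleton u)
    have h2 : MeasurableSet {z : Obs m | z.2.1 = v} :=
      (by fun_prop : Measurable fun z : Obs m => z.2.1) (measurableSet_singleton v)
    exact h1.inter h2
  have hint : ∀ u v : Fin m, Integrable
      ({z : Obs m | z.1 = u ∧ z.2.1 = v}.indicator fun _ => 4 * g u v ^ 2) P := fun u v =>
    (integrable_const _).indicator (hms u v)
  have hint2 : ∀ u : Fin m, Integrable (fun z => ∑ v : Fin m, 
      ({z : Obs m | z.1 = u ∧ z.2.1 = v}.indicator (fun _ => 4 * g u v ^ 2) z)) P := fun u =>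
    integrable_finsetSum _ fun v _ => hint u v
  calc _ ≤ ∫ z : Obs m, ∑ u, ∑ v,
        ({z : Obs m | z.1 = u ∧ z.2.1 = v}.indicator (fun _ => 4 * g u v ^ 2) z) ∂P := by
        refine integral_mono_ae (pns_memLp hb g 2).integrable_sq
          (integrable_finsetSum _ fun u _ => hint2 u) ?_
        filter_upwards [hb] with z hz
        have e : ∑ u, ∑ v,
          ({z : Obs m | z.1 = u ∧ z.2.1 = v}.indicator (fun _ => 4 * g u v ^ 2) z) =
            4 * g z.1 z.2.1 ^ 2 := by
          rw [Finset.sum_eq_single z.1, Finset.sum_eq_single z.2.1]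
          · simp
          · intro v _ hv; simp [Ne.symm hv]
          · simp
          · intro u _ hu; simp [Ne.symm hu]
          · simp
        simp only [e, mul_pow]
        have : z.2.2 ^ 2 ≤ 4 := by
          rw [← sq_abs]; nlinarith [abs_nonneg z.2.2]
        gcongr
    _ = ∑ u, ∑ v, (((m : ℝ) ^ 2)⁻¹ * (4 * g u v ^ 2)) := by
        rw [integral_finsetSum _ fun u _ => hint2 u]
        refine Finset.sum_congr rfl fun u _ => ?_
        rw [integral_finsetSum _ fun v _ => hint u v]
        refine Finset.sum_congr rfl fun v _ => ?_
        rw [integral_indicator_const _ (hms u v), measureReal_def, hU u v]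
        simp
    _ = _ := by
        simp only [Finset.mul_sum]
        refine Finset.sum_congr rfl fun u _ => Finset.sum_congr rfl fun v _ => by ring

lemma pns_var {m n : ℕ} (hn : 1 ≤ n) {P : Measure (Obs m)} [IsProbabilityMeasure P]
    (hU : UniformDesign m P)
    (hb : ∀ᵐ z ∂P, |z.2.2| ≤ 2) (l : Matrix (Fin m) (Fin m) ℝ →ₗ[ℝ] ℝ) :
    Integrable (fun ω => l (XiMat n P ω) ^ 2) (Measure.pi fun _ : Fin n => P) ∧
    ∫ ω, l (XiMat n P ω) ^ 2 ∂(Measure.pi fun _ : Fin n => P) ≤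
      (n : ℝ)⁻¹ * (4 / (m : ℝ) ^ 2 * ∑ u, ∑ v, l (Emat m u v) ^ 2) := by
  have hn0 : (0 : ℝ) < n := by exact_mod_cast hn
  set f : Obs m → ℝ := fun z => z.2.2 * l (Emat m z.1 z.2.1) with hf
  have hfL : MemLp f 2 P := pns_memLp hb (fun u v => l (Emat m u v)) 2
  have hl : ∀ A : Matrix (Fin m) (Fin m) ℝ, l A = ∑ a, ∑ b, A a b * l (Matrix.single a b 1) := by
    intro A
    conv_lhs => rw [Matrix.matrix_eq_sum_single A]
    simp only [map_sum]
    refine Finset.sum_congr rfl fun a _ => Finset.sum_congr rfl fun b _ => ?_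
    rw [← smul_eq_mul, ← map_smul, Matrix.smul_single, smul_eq_mul, mul_one]
  have hmean : l (Matrix.of fun u v => ∫ z : Obs m, z.2.2 * Emat m z.1 z.2.1 u v ∂P) =
      ∫ z, f z ∂P := by
    have hi : ∀ a b : Fin m, Integrable (fun z : Obs m => z.2.2 * Emat m z.1 z.2.1 a b) P :=
      fun a b => (pns_memLp hb (fun u v => Emat m u v a b) 1).integrable le_rfl
    rw [hl]
    simp only [Matrix.of_apply, ← integral_mul_const]
    simp_rw [← integral_finsetSum _ fun b _ => (hi _ b).mul_const _]
    rw [← integral_finsetSum _ fun a _ => integrable_finsetSum _ fun b _ => (hi a b).mul_const _]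
    congr 1
    ext z
    rw [hf]
    simp only
    rw [hl (Emat m z.1 z.2.1)]
    simp only [Finset.mul_sum, mul_assoc]
  have hYi : ∀ i : Fin n, MemLp (fun ω : Fin n → Obs m => f (ω i)) 2
      (Measure.pi fun _ : Fin n => P) := fun i =>
    hfL.comp_measurePreserving (measurePreserving_eval _ i)
  have hY : MemLp (∑ i : Fin n, fun ω : Fin n → Obs m => f (ω i)) 2
      (Measure.pi fun _ : Fin n => P) := memLp_finset_sum' _ fun i _ => hYi i
  have hEY : ∫ ω, (∑ i : Fin n, fun ω : Fin n → Obs m => f (ω i)) ω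
      ∂(Measure.pi fun _ : Fin n => P) = n * ∫ z, f z ∂P := by
    simp only [Finset.sum_apply]
    rw [integral_finsetSum _ fun i _ => (hYi i).integrable (by norm_num)]
    have : ∀ i : Fin n, ∫ ω : Fin n → Obs m, f (ω i) ∂(Measure.pi fun _ : Fin n => P) =
        ∫ z, f z ∂P := fun i =>
      integral_comp_eval (μ := fun _ : Fin n => P) hfL.aestronglyMeasurable
    simp [this]
  have hXi : ∀ ω, l (XiMat n P ω) = (n : ℝ)⁻¹ *
      ((∑ i : Fin n, fun ω : Fin n → Obs m => f (ω i)) ω - n * ∫ z, f z ∂P) := fun ω => by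
    rw [XiMat, map_sub, map_smul, map_sum, hmean, mul_sub, inv_mul_cancel_left₀ hn0.ne']
    simp only [map_smul, smul_eq_mul, Finset.sum_apply, hf]
  have hsq : ∀ ω, l (XiMat n P ω) ^ 2 = ((n : ℝ)⁻¹) ^ 2 *
      ((∑ i : Fin n, fun ω : Fin n → Obs m => f (ω i)) ω - n * ∫ z, f z ∂P) ^ 2 := fun ω => by
    rw [hXi, mul_pow]
  simp only [hsq]
  refine ⟨((hY.sub (memLp_const _)).integrable_sq).const_mul _, ?_⟩
  rw [integral_const_mul, ← hEY,
    ← ProbabilityTheory.variance_eq_integral hY.aestronglyMeasurable.aemeasurable,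
    ProbabilityTheory.variance_sum_pi (fun _ => hfL)]
  simp only [Finset.sum_const, Finset.card_univ, Fintype.card_fin, nsmul_eq_mul]
  have h1 := ProbabilityTheory.variance_le_expectation_sq (μ := P) hfL.aestronglyMeasurable
  have h2 := pns_second_moment hU hb (fun u v => l (Emat m u v))
  have h3 := h1.trans h2
  calc _ = (n : ℝ)⁻¹ * ProbabilityTheory.variance f P := by field_simp
    _ ≤ _ := by gcongr

end helpers

/-- **Lemma 2 (expected supremum of the projected noise matrix over
Sobolev-constrained balls).** -/
theorem projected_noise_sup_bound (c γ : ℝ) (hc : 1 ≤ c) (hγ0 : 0 < γ) (hγ1 : γ < 1) :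
    ∀ (m n k0 : ℕ) (lam : ℕ → ℝ) (φ : ℕ → Fin m → ℝ) (Fbar : ℝ → ℝ)
      (S : Matrix (Fin m) (Fin m) ℝ) (μ : ℕ → ℝ) (ψ : ℕ → Fin m → ℝ) (φfun : ℝ → ℝ)
      (P : Measure (Obs m)),
      1 ≤ m → 1 ≤ n →
      IsEigenData m c lam φ k0 →
      IsSpectralMajorant m γ lam Fbar →
      SpectralRep m S μ ψ →
      MemPsi lam φ Fbar μ ψ φfun →
      IsProbabilityMeasure P → UniformDesign m P → (∀ᵐ z ∂P, |z.2.2| ≤ 2) →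
      ∀ δ : ℝ, 0 < δ →
        (∫ ω : Fin n → Obs m,
            sSup {x : ℝ | ∃ M : Matrix (Fin m) (Fin m) ℝ, M.IsSymm ∧
              hsNormSq M ≤ δ ^ 2 ∧ sobolevHSSq lam φ M ≤ 1 ∧
              x = |hsInner (calPData μ ψ (XiMat n P ω)) M|}
          ∂(Measure.pi fun _ : Fin n => P)) ≤
        4 * Real.sqrt 2 * Real.sqrt ((c + γ) / γ + 1) * Real.sqrt (1 / (n * m)) * δ *
          Real.sqrt (φfun ((δ ^ 2)⁻¹)) := by
  intro m n k0 lam φ Fbar S μ ψ φfun P hm hn hE hF hS hΨ hP hU hb δ hδ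
  have hm0 : (0 : ℝ) < m := by exact_mod_cast hm
  have hn0 : (0 : ℝ) < n := by exact_mod_cast hn
  have hT : 0 < (δ ^ 2)⁻¹ := by positivity
  have hφT := hΨ.1 _ hT
  set R := 4 * Real.sqrt 2 * Real.sqrt ((c + γ) / γ + 1) * Real.sqrt (1 / (n * m)) * δ *
          Real.sqrt (φfun ((δ ^ 2)⁻¹)) with hR
  have hR0 : 0 ≤ R := by positivity
  have hR2 : R ^ 2 = 32 * ((c + γ) / γ + 1) * (1 / (n * m)) * δ ^ 2 * φfun ((δ ^ 2)⁻¹) := by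
    rw [hR]
    simp only [mul_pow]
    rw [Real.sq_sqrt (by norm_num), Real.sq_sqrt (by positivity), Real.sq_sqrt (by positivity),
      Real.sq_sqrt hφT]
    ring
  set w : ℕ → ℝ := fun k => (lam k + (δ ^ 2)⁻¹)⁻¹ with hw
  have hw0 : ∀ k ∈ Finset.Icc 1 m, 0 ≤ w k := fun k hk =>
    inv_nonneg.2 (add_nonneg (hE.nonneg k hk) hT.le)
  set Q : (Fin n → Obs m) → ℝ := fun ω => 2 * ∑ k ∈ Finset.Icc 1 m, w k *
    ∑ a, (pnsL μ ψ (φ k) a (XiMat n P ω)) ^ 2 with hQ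
  have hvar := fun k a => pns_var hn hU hb (pnsL μ ψ (φ k) a)
  have hQint : Integrable Q (Measure.pi fun _ : Fin n => P) :=
    (integrable_finsetSum _ fun k _ =>
      (integrable_finsetSum _ fun a _ => (hvar k a).1).const_mul _).const_mul _
  have hQE : ∫ ω, Q ω ∂(Measure.pi fun _ : Fin n => P) ≤ R ^ 2 := by
    calc _ = 2 * ∑ k ∈ Finset.Icc 1 m, w k * ∑ a,
          ∫ ω, (pnsL μ ψ (φ k) a (XiMat n P ω)) ^ 2 ∂(Measure.pi fun _ : Fin n => P) := by
          rw [hQ, integral_const_mul, integral_finsetSum _ fun k _ =>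
            (integrable_finsetSum _ fun a _ => (hvar k a).1).const_mul _]
          congr 1
          refine Finset.sum_congr rfl fun k _ => ?_
          rw [integral_const_mul, integral_finsetSum _ fun a _ => (hvar k a).1]
      _ ≤ 2 * ∑ k ∈ Finset.Icc 1 m, w k * ((n : ℝ)⁻¹ * (4 / (m : ℝ) ^ 2 *
            (2 * ((pnsI m μ).card + m * projNormSqData μ ψ (φ k))))) := by
          refine mul_le_mul_of_nonneg_left (Finset.sum_le_sum fun k hk =>
            mul_le_mul_of_nonneg_left ?_ (hw0 k hk)) (by norm_num)
          refine (Finset.sum_le_sum fun a _ => (hvar k a).2).trans ?_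
          rw [← Finset.mul_sum, ← Finset.mul_sum]
          have h1 := pns_sum_E hS.1 μ (φ k)
          rw [pns_normsq hE.orth hk, mul_one] at h1
          gcongr
      _ = 16 * (n : ℝ)⁻¹ / (m : ℝ) ^ 2 * ∑ k ∈ Finset.Icc 1 m, w k *
            ((pnsI m μ).card + m * projNormSqData μ ψ (φ k)) := by
          simp only [Finset.mul_sum]
          refine Finset.sum_congr rfl fun k _ => by ring
      _ ≤ 16 * (n : ℝ)⁻¹ / (m : ℝ) ^ 2 *
            (m * (2 * φfun ((δ ^ 2)⁻¹) * γ⁻¹ / (δ ^ 2)⁻¹)) :=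
          mul_le_mul_of_nonneg_left (pns_weighted hm hE hF hS.1 hΨ hT) (by positivity)
      _ = 32 * γ⁻¹ * (1 / (n * m)) * δ ^ 2 * φfun ((δ ^ 2)⁻¹) := by
          field_simp
          ring
      _ ≤ R ^ 2 := by
          rw [hR2]
          have : γ⁻¹ ≤ (c + γ) / γ + 1 := by
            rw [inv_eq_one_div, div_add_one hγ0.ne']
            gcongr
            linarith
          gcongr
  refine le_of_forall_gt_imp_ge_of_dense fun θ hθ => ?_
  have hθ0 : 0 < θ := hR0.trans_lt hθ
  have hbound : ∀ ω : Fin n → Obs m, ∀ x ∈ {x : ℝ | ∃ M : Matrix (Fin m) (Fin m) ℝ, M.IsSymm ∧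
              hsNormSq M ≤ δ ^ 2 ∧ sobolevHSSq lam φ M ≤ 1 ∧
              x = |hsInner (calPData μ ψ (XiMat n P ω)) M|},
        0 ≤ x ∧ x ≤ (Q ω + θ ^ 2) / (2 * θ) := by
    rintro ω x ⟨M, -, h1, h2, rfl⟩
    refine ⟨abs_nonneg _, ?_⟩
    have h3 : _ ≤ Q ω := pns_det hE.orth hE.nonneg hδ (calPData μ ψ (XiMat n P ω)) M h1 h2
    rw [le_div_iff₀ (by positivity)]
    rw [← sq_abs] at h3
    nlinarith [sq_nonneg (|hsInner (calPData μ ψ (XiMat n P ω)) M| - θ)]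
  have hQ0 : ∀ ω, 0 ≤ Q ω := fun ω => mul_nonneg (by norm_num) (Finset.sum_nonneg fun k hk =>
    mul_nonneg (hw0 k hk) (Finset.sum_nonneg fun a _ => sq_nonneg _))
  calc _ ≤ ∫ ω, (Q ω + θ ^ 2) / (2 * θ) ∂(Measure.pi fun _ : Fin n => P) := by
        refine integral_mono_of_nonneg (Filter.Eventually.of_forall fun ω => ?_)
          ((hQint.add (integrable_const _)).div_const _) (Filter.Eventually.of_forall fun ω => ?_)
        · exact Real.sSup_nonneg fun x hx => (hbound ω x hx).1
        · exact Real.sSup_le (fun x hx => (hbound ω x hx).2)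
            (div_nonneg (add_nonneg (hQ0 ω) (sq_nonneg _)) (by positivity))
    _ = (∫ ω, Q ω ∂(Measure.pi fun _ : Fin n => P) + θ ^ 2) / (2 * θ) := by
        rw [integral_div, integral_add hQint (integrable_const _)]
        simp
    _ ≤ θ := by
        rw [div_le_iff₀ (by positivity)]
        nlinarith

end
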